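/- Let A : ℝ → Matrix (Fin n) (Fin n) ℝ be RAP and suppose: (H1) x' = A(t)x has an (α,K,P)-exponential dichotomy whose Green kernel G has the RAP-integral property; (H2) f : ℝ × ℝⁿ → ℝⁿ is RAP in t uniformly with respect to x in compact subsets of ℝⁿ, and for every r > 0 there is a constant M(r) < α/(2K) with ‖f(t,x) − f(t,y)‖ ≤ M(r)‖x−y‖ whenever ‖x‖,‖y‖ ≤ r; ξ : ℝ → ℝⁿ is the unique RAP solution of y' = A(t)y + f(t,y); (H3) f(t,·) is twice continuously differentiable with the second-order partial derivatives locally Lipschitz in x uniformly in t, the map t ↦ (∂f/∂x)(t,ξ(t)) is RAP, δ := sup_{t∈ℝ} ‖(∂f/∂x)(t,ξ(t))‖ < α/(4K²), and the Green kernel of the variational system u' = (A(t) + (∂f/∂x)(t,ξ(t)))u also has the RAP-integral property; (H4) g : ℝ × ℝⁿ × [0,ν̄] → ℝⁿ satisfies: g_ν(t,x) := g(t,x,ν) is RAP in t uniformly with respect to (x,ν) in bounded sets, g₀ ≡ 0, for each ν the function g_ν is bounded on ℝ × B[0,r] for every r, there are constants M₁(r,ν) with ‖g_ν(t,x) − g_ν(t,y)‖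 ≤ M₁(r,ν)‖x−y‖ for ‖x‖,‖y‖ ≤ r, and for each fixed r > 0 both ‖g_ν‖_r := sup{‖g_ν(t,x)‖ : t ∈ ℝ, ‖x‖ ≤ r} → 0 and M₁(r,ν) → 0 as ν → 0⁺. Then there exist r > 0 and ν₀ = ν₀(r) > 0 such that for every ν ∈ [0,ν₀] the system x' = A(t)x + f(t,x) + g_ν(t,x) has exactly one RAP solution ψ_ν with sup_{t∈ℝ} ‖ψ_ν(t) − ξ(t)‖ ≤ r. -/

import Mathlib

open MeasureTheory Filter Metric

noncomputable def opNorm {n : ℕ} (A : Matrix (Fin n) (Fin n) ℝ) : ℝ :=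
  ‖LinearMap.toContinuousLinearMap (Matrix.toEuclideanLin A)‖

noncomputable def mulVecE {n : ℕ} (A : Matrix (Fin n) (Fin n) ℝ)
    (v : EuclideanSpace ℝ (Fin n)) : EuclideanSpace ℝ (Fin n) :=
  Matrix.toEuclideanLin A v

noncomputable def clmToMatrix {n : ℕ}
    (L : EuclideanSpace ℝ (Fin n) →L[ℝ] EuclideanSpace ℝ (Fin n)) :
    Matrix (Fin n) (Fin n) ℝ :=
  Matrix.toEuclideanLin.symm (L : EuclideanSpace ℝ (Fin n) →ₗ[ℝ] EuclideanSpace ℝ (Fin n))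

def RelativelyDense (S : Set ℝ) : Prop :=
  ∃ l > 0, ∀ a : ℝ, ∃ τ ∈ S, τ ∈ Set.Icc a (a + l)

def RAP {E : Type*} [NormedAddCommGroup E] (f : ℝ → E) : Prop :=
  (∃ C, ∀ t, ‖f t‖ ≤ C) ∧ UniformContinuous f ∧
  ∀ ε > 0, RelativelyDense
    {τ | Filter.limsup (fun t => ‖f (t + τ) - f t‖) (Filter.cocompact ℝ) < ε}

def RAPUniform {E F : Type*} [NormedAddCommGroup E] [NormedAddCommGroup F]
    (f : ℝ → E → F) (S : Set E) : Prop :=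
  (∃ C, ∀ t, ∀ x ∈ S, ‖f t x‖ ≤ C) ∧
  UniformContinuousOn (fun p : ℝ × E => f p.1 p.2) (Set.univ ×ˢ S) ∧
  ∀ ε > 0, RelativelyDense
    {τ | Filter.limsup (fun t => ⨆ x ∈ S, ‖f (t + τ) x - f t x‖) (Filter.cocompact ℝ) < ε}

def RAPMatrix {n : ℕ} (A : ℝ → Matrix (Fin n) (Fin n) ℝ) : Prop :=
  ∀ i j, RAP (fun t => A t i j)

def IsFundamentalMatrix {n : ℕ} (A Φ : ℝ → Matrix (Fin n) (Fin n) ℝ) : Prop :=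
  Φ 0 = 1 ∧ (∀ t, IsUnit (Φ t)) ∧
  ∀ t i j, HasDerivAt (fun τ => Φ τ i j) ((A t * Φ t) i j) t

def ExpDichotomy {n : ℕ} (Φ : ℝ → Matrix (Fin n) (Fin n) ℝ)
    (α K : ℝ) (P : Matrix (Fin n) (Fin n) ℝ) : Prop :=
  P * P = P ∧
  (∀ t s : ℝ, s ≤ t → opNorm (Φ t * P * (Φ s)⁻¹) ≤ K * Real.exp (-α * (t - s))) ∧
  (∀ t s : ℝ, t < s → opNorm (Φ t * (1 - P) * (Φ s)⁻¹) ≤ K * Real.exp (-α * (s - t)))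

noncomputable def GreenKernel {n : ℕ} (Φ : ℝ → Matrix (Fin n) (Fin n) ℝ)
    (P : Matrix (Fin n) (Fin n) ℝ) (t s : ℝ) : Matrix (Fin n) (Fin n) ℝ :=
  if s ≤ t then Φ t * P * (Φ s)⁻¹ else -(Φ t * (1 - P) * (Φ s)⁻¹)

def RAPIntegralProperty {n : ℕ} (G : ℝ → ℝ → Matrix (Fin n) (Fin n) ℝ) : Prop :=
  ∀ h : ℝ → EuclideanSpace ℝ (Fin n), RAP h →
    RAP (fun t => ∫ s : ℝ, mulVecE (G t s) (h s))


section RAPpart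

def TSet {X F : Type*} [NormedAddCommGroup F] (f : ℝ → X → F) (S : Set X) (ε : ℝ) : Set ℝ :=
  {τ | ∀ᶠ t in cocompact ℝ, ∀ x ∈ S, ‖f (t + τ) x - f t x‖ ≤ ε}

def TSet1 {F : Type*} [NormedAddCommGroup F] (f : ℝ → F) (ε : ℝ) : Set ℝ :=
  {τ | ∀ᶠ t in cocompact ℝ, ‖f (t + τ) - f t‖ ≤ ε}

theorem RelativelyDense.mono {S T : Set ℝ} (h : RelativelyDense S) (hST : S ⊆ T) :
    RelativelyDense T := by
  obtain ⟨l, hl, H⟩ := h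
  refine ⟨l, hl, fun a => ?_⟩
  obtain ⟨τ, h1, h2⟩ := H a
  exact ⟨τ, hST h1, h2⟩

theorem tendsto_shift (σ : ℝ) : Tendsto (fun t : ℝ => t - σ) (cocompact ℝ) (cocompact ℝ) := by
  have := (Homeomorph.addRight (-σ)).isClosedEmbedding.tendsto_cocompact
  simpa [sub_eq_add_neg] using this

theorem TSet_sub {X F : Type*} [NormedAddCommGroup F] {f : ℝ → X → F} {S : Set X} {a b τ σ : ℝ}
    (h1 : τ ∈ TSet f S a) (h2 : σ ∈ TSet f S b) : τ - σ ∈ TSet f S (a + b) := by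
  have h1' := (tendsto_shift σ).eventually h1
  have h2' := (tendsto_shift σ).eventually h2
  filter_upwards [h1', h2'] with t k1 k2 x hx
  have e1 := k1 x hx
  have e2 := k2 x hx
  rw [sub_add_cancel, norm_sub_rev] at e2
  rw [show t + (τ - σ) = t - σ + τ by ring]
  calc _ = ‖(f (t - σ + τ) x - f (t - σ) x) + (f (t - σ) x - f t x)‖ := by congr 1; abel
    _ ≤ _ := norm_add_le _ _
    _ ≤ _ := add_le_add e1 e2

theorem TSet1_eq {F : Type*} [NormedAddCommGroup F] (f : ℝ → F) (ε : ℝ) :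
    TSet1 f ε = TSet (fun t (_ : Unit) => f t) Set.univ ε := by
  ext τ; simp [TSet, TSet1]

theorem TSet1_sub {F : Type*} [NormedAddCommGroup F] {f : ℝ → F} {a b τ σ : ℝ}
    (h1 : τ ∈ TSet1 f a) (h2 : σ ∈ TSet1 f b) : τ - σ ∈ TSet1 f (a + b) := by
  rw [TSet1_eq] at *
  exact TSet_sub h1 h2

theorem common (T1 T2 : ℝ → Set ℝ)
    (h1 : ∀ ε > 0, RelativelyDense (T1 ε)) (h2 : ∀ ε > 0, RelativelyDense (T2 ε))
    (s1 : ∀ a b τ σ, τ ∈ T1 a → σ ∈ T1 b → τ - σ ∈ T1 (a + b))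
    (s2 : ∀ a b τ σ, τ ∈ T2 a → σ ∈ T2 b → τ - σ ∈ T2 (a + b))
    (hs : ∀ ε > 0, ∃ d > 0, ∀ τ : ℝ, |τ| < d → τ ∈ T2 ε) :
    ∀ ε > 0, RelativelyDense (T1 ε ∩ T2 ε) := by
  intro ε hε
  obtain ⟨l1, hl1, H1⟩ := h1 (ε / 2) (by positivity)
  obtain ⟨l2, hl2, H2⟩ := h2 (ε / 4) (by positivity)
  obtain ⟨d, hd, Hd⟩ := hs (ε / 2) (by positivity)
  choose t1 m1 i1 using H1
  choose t2 m2 i2 using H2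
  have hsub : Set.range (fun a => t1 a - t2 a) ⊆ Set.Icc (-l2) l1 := by
    rintro _ ⟨a, rfl⟩
    have := i1 a; have := i2 a
    simp only [Set.mem_Icc] at *
    constructor <;> linarith
  have htb : TotallyBounded (Set.range (fun a => t1 a - t2 a)) :=
    (isCompact_Icc.totallyBounded).subset hsub
  obtain ⟨t, ht, hfin, hcov⟩ := Metric.finite_approx_of_totallyBounded htb d hd
  have hb : ∀ y : t, ∃ b, t1 b - t2 b = y := fun y => ht y.2
  choose b hb using hb
  have := hfin.to_subtype
  obtain ⟨C, hC⟩ := (Set.finite_range (fun y : t => |t1 (b y)|)).bddAbove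
  have hC' : ∀ y : t, |t1 (b y)| ≤ C := fun y => hC ⟨y, rfl⟩
  refine ⟨2 * |C| + l1, by positivity, fun a => ?_⟩
  have hm := hcov ⟨a + |C|, rfl⟩
  simp only [Set.mem_iUnion, mem_ball, Real.dist_eq] at hm
  obtain ⟨y, hy, hlt⟩ := hm
  set y' : t := ⟨y, hy⟩
  refine ⟨t1 (a + |C|) - t1 (b y'), ⟨?_, ?_⟩, ?_⟩
  · have := s1 _ _ _ _ (m1 (a + |C|)) (m1 (b y'))
    rwa [add_halves] at this
  · have k1 := s2 _ _ _ _ (m2 (a + |C|)) (m2 (b y'))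
    have k2 := Hd ((t2 (a + |C|) - t2 (b y')) - (t1 (a + |C|) - t1 (b y'))) (by
      have : t1 (b y') - t2 (b y') = y := hb y'
      rw [abs_sub_comm]
      convert hlt using 2
      rw [← this]; ring)
    have := s2 _ _ _ _ k1 k2
    rw [show ε / 4 + ε / 4 + ε / 2 = ε by ring] at this
    convert this using 1
    ring
  · have := i1 (a + |C|)
    have h3 := abs_le.1 ((hC' y').trans (le_abs_self C))
    simp only [Set.mem_Icc] at *
    constructor <;> linarith [h3.1, h3.2]

theorem RAP.dense {F : Type*} [NormedAddCommGroup F] {f : ℝ → F} (h : RAP f) :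
    ∀ ε > 0, RelativelyDense (TSet1 f ε) := by
  intro ε hε
  obtain ⟨⟨C, hC⟩, -, h3⟩ := h
  refine (h3 ε hε).mono fun τ hτ => ?_
  have hτ' : Filter.limsup (fun t => ‖f (t + τ) - f t‖) (Filter.cocompact ℝ) < ε := hτ
  have := eventually_lt_of_limsup_lt hτ' (isBoundedUnder_of ⟨C + C, fun t =>
    (norm_sub_le _ _).trans (add_le_add (hC _) (hC _))⟩)
  exact this.mono fun t ht => ht.le

theorem RAP.of_TSet1 {F : Type*} [NormedAddCommGroup F] {f : ℝ → F}
    (h1 : ∃ C, ∀ t, ‖f t‖ ≤ C) (h2 : UniformContinuous f)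
    (h3 : ∀ ε > 0, RelativelyDense (TSet1 f ε)) : RAP f := by
  refine ⟨h1, h2, fun ε hε => (h3 (ε / 2) (by positivity)).mono fun τ hτ => ?_⟩
  have hτ' : ∀ᶠ t in cocompact ℝ, ‖f (t + τ) - f t‖ ≤ ε / 2 := hτ
  have : Filter.limsup (fun t => ‖f (t + τ) - f t‖) (Filter.cocompact ℝ) ≤ ε / 2 :=
    limsup_le_of_le (isCoboundedUnder_le_of_le _ (x := 0) (fun t => norm_nonneg _)) hτ'
  show _ < ε
  linarith

theorem RAPUniform.dense {E F : Type*} [NormedAddCommGroup E] [NormedAddCommGroup F]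
    {f : ℝ → E → F} {S : Set E} (h : RAPUniform f S) :
    ∀ ε > 0, RelativelyDense (TSet f S ε) := by
  intro ε hε
  obtain ⟨⟨C, hC⟩, -, h3⟩ := h
  refine (h3 ε hε).mono fun τ hτ => ?_
  have hτ' : Filter.limsup (fun t => ⨆ x ∈ S, ‖f (t + τ) x - f t x‖) (Filter.cocompact ℝ) < ε := hτ
  have hb : ∀ t, ∀ x ∈ S, ‖f (t + τ) x - f t x‖ ≤ |C| + |C| := fun t x hx =>
    (norm_sub_le _ _).trans (add_le_add ((hC _ _ hx).trans (le_abs_self C))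
      ((hC _ _ hx).trans (le_abs_self C)))
  have hb' : ∀ t x, (⨆ (_ : x ∈ S), ‖f (t + τ) x - f t x‖) ≤ |C| + |C| := fun t x =>
    Real.iSup_le (fun hx => hb t x hx) (by positivity)
  have := eventually_lt_of_limsup_lt hτ' (isBoundedUnder_of ⟨|C| + |C|, fun t =>
    Real.iSup_le (fun x => hb' t x) (by positivity)⟩)
  filter_upwards [this] with t ht x hx
  refine le_trans ?_ ht.le
  refine le_trans ?_ (le_ciSup (f := fun x => ⨆ (_ : x ∈ S), ‖f (t + τ) x - f t x‖)
    ⟨|C| + |C|, by rintro _ ⟨x, rfl⟩; exact hb' t x⟩ x)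
  simp [hx]

theorem RAP.small {F : Type*} [NormedAddCommGroup F] {f : ℝ → F} (h : RAP f) :
    ∀ ε > 0, ∃ d > 0, ∀ τ : ℝ, |τ| < d → τ ∈ TSet1 f ε := by
  intro ε hε
  obtain ⟨d, hd, H⟩ := Metric.uniformContinuous_iff.1 h.2.1 ε hε
  refine ⟨d, hd, fun τ hτ => Eventually.of_forall fun t => ?_⟩
  have := H (a := t + τ) (b := t) (by simpa [Real.dist_eq] using hτ)
  rw [dist_eq_norm] at this
  exact this.le

theorem RAP.comp {E F : Type*} [NormedAddCommGroup E] [NormedAddCommGroup F]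
    {f : ℝ → E → F} {S : Set E} (hf : RAPUniform f S) {φ : ℝ → E} (hφ : RAP φ)
    (hS : ∀ t, φ t ∈ S) : RAP (fun t => f t (φ t)) := by
  refine RAP.of_TSet1 ?_ ?_ ?_
  · obtain ⟨C, hC⟩ := hf.1
    exact ⟨C, fun t => hC t _ (hS t)⟩
  · have := hf.2.1
    rw [Metric.uniformContinuousOn_iff] at this
    rw [Metric.uniformContinuous_iff]
    intro ε hε
    obtain ⟨d, hd, H⟩ := this ε hε
    obtain ⟨d', hd', H'⟩ := Metric.uniformContinuous_iff.1 hφ.2.1 d hd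
    refine ⟨min d d', lt_min hd hd', fun {a b} hab => ?_⟩
    refine H (a, φ a) (by simp [hS]) (b, φ b) (by simp [hS]) ?_
    rw [Prod.dist_eq]
    exact max_lt (hab.trans_le (min_le_left _ _)) (H' (hab.trans_le (min_le_right _ _)))
  · intro ε hε
    have := hf.2.1
    rw [Metric.uniformContinuousOn_iff] at this
    obtain ⟨d, hd, H⟩ := this (ε / 2) (by positivity)
    have := common (TSet f S) (TSet1 φ) hf.dense hφ.dense (fun _ _ _ _ => TSet_sub)
      (fun _ _ _ _ => TSet1_sub) hφ.small (min (ε / 2) (d / 2)) (by positivity)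
    refine this.mono ?_
    rintro τ ⟨k1, k2⟩
    filter_upwards [k1, k2] with t e1 e2
    have e1 := (e1 _ (hS (t + τ))).trans (min_le_left _ _)
    have e2 := e2.trans (min_le_right _ _)
    have e3 := H (t, φ (t + τ)) (by simp [hS]) (t, φ t) (by simp [hS]) (by
      rw [Prod.dist_eq]; simp only [dist_self, dist_eq_norm]
      exact max_lt hd (by linarith))
    rw [dist_eq_norm] at e3
    calc _ = ‖(f (t + τ) (φ (t + τ)) - f t (φ (t + τ))) + (f t (φ (t + τ)) - f t (φ t))‖ := by
          congr 1; abel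
      _ ≤ _ := norm_add_le _ _
      _ ≤ ε := by simp only at e3; linarith

theorem RAP.add {F : Type*} [NormedAddCommGroup F] {f g : ℝ → F} (hf : RAP f) (hg : RAP g) :
    RAP (fun t => f t + g t) := by
  refine RAP.of_TSet1 ?_ (hf.2.1.add hg.2.1) ?_
  · obtain ⟨C, hC⟩ := hf.1
    obtain ⟨D, hD⟩ := hg.1
    exact ⟨C + D, fun t => (norm_add_le _ _).trans (add_le_add (hC t) (hD t))⟩
  · intro ε hε
    have := common (TSet1 f) (TSet1 g) hf.dense hg.dense (fun _ _ _ _ => TSet1_sub)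
      (fun _ _ _ _ => TSet1_sub) hg.small (ε / 2) (by positivity)
    refine this.mono ?_
    rintro τ ⟨k1, k2⟩
    filter_upwards [k1, k2] with t e1 e2
    rw [add_sub_add_comm]
    exact (norm_add_le _ _).trans (by linarith)

theorem RAP.of_approx {F : Type*} [NormedAddCommGroup F] {f : ℝ → F}
    (h : ∀ ε > 0, ∃ g, RAP g ∧ ∀ t, ‖f t - g t‖ ≤ ε) : RAP f := by
  refine RAP.of_TSet1 ?_ ?_ ?_
  · obtain ⟨g, hg, H⟩ := h 1 one_pos
    obtain ⟨C, hC⟩ := hg.1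
    refine ⟨1 + C, fun t => ?_⟩
    calc _ = ‖(f t - g t) + g t‖ := by simp
      _ ≤ _ := norm_add_le _ _
      _ ≤ _ := add_le_add (H t) (hC t)
  · rw [Metric.uniformContinuous_iff]
    intro ε hε
    obtain ⟨g, hg, H⟩ := h (ε / 4) (by positivity)
    obtain ⟨d, hd, Hd⟩ := Metric.uniformContinuous_iff.1 hg.2.1 (ε / 4) (by positivity)
    refine ⟨d, hd, fun {a b} hab => ?_⟩
    have e1 := H a
    have e2 := H b
    have e3 := Hd hab
    rw [dist_eq_norm] at *
    rw [norm_sub_rev] at e2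
    calc _ = ‖(f a - g a) + (g a - g b) + (g b - f b)‖ := by congr 1; abel
      _ ≤ _ := norm_add₃_le
      _ < ε := by linarith
  · intro ε hε
    obtain ⟨g, hg, H⟩ := h (ε / 4) (by positivity)
    refine (hg.dense (ε / 4) (by positivity)).mono fun τ hτ => ?_
    filter_upwards [hτ] with t e3
    have e1 := H (t + τ)
    have e2 := H t
    rw [norm_sub_rev] at e2
    calc _ = ‖(f (t + τ) - g (t + τ)) + (g (t + τ) - g t) + (g t - f t)‖ := by congr 1; abel
      _ ≤ _ := norm_add₃_le
      _ ≤ ε := by linarith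

end RAPpart

section Dichpart

set_option linter.unusedSectionVars false

variable {E : Type*} [NormedAddCommGroup E] [NormedSpace ℝ E] [CompleteSpace E]

noncomputable def Gc (U V : ℝ → E →L[ℝ] E) (P : E →L[ℝ] E) (t s : ℝ) : E →L[ℝ] E :=
  if s ≤ t then U t * P * V s else -(U t * (1 - P) * V s)

structure Dich (A U V : ℝ → E →L[ℝ] E) (P : E →L[ℝ] E) (α K : ℝ) : Prop where
  hα : 0 < α
  hK : 0 ≤ K
  U0 : U 0 = 1
  UV : ∀ t, U t * V t = 1
  VU : ∀ t, V t * U t = 1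
  dU : ∀ t, HasDerivAt U (A t * U t) t
  b1 : ∀ t s, s ≤ t → ‖U t * P * V s‖ ≤ K * Real.exp (-α * (t - s))
  b2 : ∀ t s, t < s → ‖U t * (1 - P) * V s‖ ≤ K * Real.exp (-α * (s - t))

variable {A U V : ℝ → E →L[ℝ] E} {P : E →L[ℝ] E} {α K : ℝ}

theorem Dich.dV (D : Dich A U V P α K) (t : ℝ) : HasDerivAt V (-(V t * A t)) t := by
  have hV : V = fun t => Ring.inverse (U t) := by
    funext s
    exact (Ring.inverse_unit (⟨U s, V s, D.UV s, D.VU s⟩ : (E →L[ℝ] E)ˣ)).symm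
  have h := (hasFDerivAt_ringInverse (𝕜 := ℝ) (⟨U t, V t, D.UV t, D.VU t⟩ : (E →L[ℝ] E)ˣ)).comp_hasDerivAt t (D.dU t)
  have h2 := h.congr_of_eventuallyEq (f₁ := V) (Eventually.of_forall fun s => congrFun hV s)
  have e : -(V t * A t) = -(V t * (A t * U t) * V t) := by
    rw [mul_assoc, mul_assoc, D.UV, mul_one]
  rw [e]
  exact h2

theorem Dich.V0 (D : Dich A U V P α K) : V 0 = 1 := by
  have := D.UV 0
  rwa [D.U0, one_mul] at this

theorem Dich.contV (D : Dich A U V P α K) : Continuous V :=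
  continuous_iff_continuousAt.2 fun t => (D.dV t).continuousAt

/-- bounded solutions of the homogeneous system vanish -/
theorem Dich.homog (D : Dich A U V P α K) {w : ℝ → E} (hw : ∀ t, HasDerivAt w (A t (w t)) t)
    (hb : ∃ C, ∀ t, ‖w t‖ ≤ C) : ∀ t, w t = 0 := by
  obtain ⟨C, hC⟩ := hb
  have hC0 : 0 ≤ C := (norm_nonneg _).trans (hC 0)
  have hd : ∀ t, HasDerivAt (fun t => V t (w t)) 0 t := by
    intro t
    convert (D.dV t).clm_apply (hw t) using 1
    simp
  have hc : ∀ t, V t (w t) = w 0 := by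
    intro t
    have := is_const_of_deriv_eq_zero (fun t => (hd t).differentiableAt) (fun t => (hd t).deriv) t 0
    simpa [D.V0] using this
  have hwt : ∀ t, w t = U t (w 0) := by
    intro t
    rw [← hc t, ← mul_apply_eq_comp, D.UV]; rfl
  intro t
  have e1 : (U t * P) (w 0) = 0 := by
    have key : ∀ s ≤ t, ‖(U t * P) (w 0)‖ ≤ K * Real.exp (-α * (t - s)) * C := by
      intro s hs
      rw [← hc s, ← mul_apply_eq_comp]
      exact (ContinuousLinearMap.le_opNorm _ _).trans
        (mul_le_mul (D.b1 t s hs) (hC s) (norm_nonneg _) (mul_nonneg D.hK (Real.exp_pos _).le))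
    have hl : Tendsto (fun s => K * Real.exp (-α * (t - s)) * C) atBot (nhds (K * 0 * C)) := by
      refine ((Real.tendsto_exp_atBot.comp ?_).const_mul K).mul_const C
      have : Tendsto (fun s => α * s + -α * t) atBot atBot :=
        tendsto_atBot_add_const_right _ _ (tendsto_id.const_mul_atBot D.hα)
      refine this.congr fun s => by ring
    have := ge_of_tendsto hl ((eventually_le_atBot t).mono key)
    simpa using this
  have e2 : (U t * (1 - P)) (w 0) = 0 := by
    have key : ∀ s > t, ‖(U t * (1 - P)) (w 0)‖ ≤ K * Real.exp (-α * (s - t)) * C := by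
      intro s hs
      rw [← hc s, ← mul_apply_eq_comp]
      exact (ContinuousLinearMap.le_opNorm _ _).trans
        (mul_le_mul (D.b2 t s hs) (hC s) (norm_nonneg _) (mul_nonneg D.hK (Real.exp_pos _).le))
    have hl : Tendsto (fun s => K * Real.exp (-α * (s - t)) * C) atTop (nhds (K * 0 * C)) := by
      refine ((Real.tendsto_exp_atBot.comp ?_).const_mul K).mul_const C
      have : Tendsto (fun s => -α * s + α * t) atTop atBot :=
        tendsto_atBot_add_const_right _ _ (tendsto_id.const_mul_atTop_of_neg (by linarith [D.hα]))
      refine this.congr fun s => by ring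
    have := ge_of_tendsto hl ((eventually_gt_atTop t).mono key)
    simpa using this
  have : U t (w 0) = (U t * P) (w 0) + (U t * (1 - P)) (w 0) := by
    simp
  rw [hwt, this, e1, e2, add_zero]

theorem expIic (hα : 0 < α) (t : ℝ) :
    IntegrableOn (fun s => Real.exp (-α * (t - s))) (Set.Iic t) ∧
    ∫ s in Set.Iic t, Real.exp (-α * (t - s)) = 1 / α := by
  have e : (fun s => Real.exp (-α * (t - s))) = fun s => Real.exp (-α * t) * Real.exp (α * s) := by
    funext s; rw [← Real.exp_add]; ring_nf
  rw [e]
  refine ⟨(integrableOn_exp_mul_Iic hα t).const_mul _, ?_⟩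
  rw [integral_const_mul, integral_exp_mul_Iic hα, mul_div, ← Real.exp_add]
  simp

theorem expIoi (hα : 0 < α) (t : ℝ) :
    IntegrableOn (fun s => Real.exp (-α * (s - t))) (Set.Ioi t) ∧
    ∫ s in Set.Ioi t, Real.exp (-α * (s - t)) = 1 / α := by
  have e : (fun s => Real.exp (-α * (s - t))) = fun s => Real.exp (α * t) * Real.exp (-α * s) := by
    funext s; rw [← Real.exp_add]; ring_nf
  have h : -α < 0 := by linarith
  rw [e]
  refine ⟨(integrableOn_exp_mul_Ioi h t).const_mul _, ?_⟩
  rw [integral_const_mul, integral_exp_mul_Ioi h, mul_div, mul_neg, ← Real.exp_add]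
  simp

theorem Dich.int1 (D : Dich A U V P α K) {h : ℝ → E} (hc : Continuous h) {C : ℝ}
    (hC : ∀ t, ‖h t‖ ≤ C) (t : ℝ) :
    IntegrableOn (fun s => (U t * P * V s) (h s)) (Set.Iic t) ∧
    ‖∫ s in Set.Iic t, (U t * P * V s) (h s)‖ ≤ K * C / α := by
  have hbd : ∀ᵐ s ∂(volume.restrict (Set.Iic t)),
      ‖(U t * P * V s) (h s)‖ ≤ (K * C) * Real.exp (-α * (t - s)) := by
    refine (ae_restrict_iff' measurableSet_Iic).2 (Eventually.of_forall fun s hs => ?_)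
    refine (ContinuousLinearMap.le_opNorm _ _).trans ((mul_le_mul (D.b1 t s hs) (hC s)
      (norm_nonneg _) (mul_nonneg D.hK (Real.exp_pos _).le)).trans_eq (by ring))
  have hi := (expIic D.hα t).1.const_mul (K * C)
  have hm : Continuous fun s => (U t * P * V s) (h s) :=
    (continuous_const.mul D.contV).clm_apply hc
  refine ⟨Integrable.mono' hi hm.aestronglyMeasurable hbd, ?_⟩
  refine (norm_integral_le_of_norm_le hi hbd).trans_eq ?_
  rw [integral_const_mul, (expIic D.hα t).2]; ring

theorem Dich.int2 (D : Dich A U V P α K) {h : ℝ → E} (hc : Continuous h) {C : ℝ}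
    (hC : ∀ t, ‖h t‖ ≤ C) (t : ℝ) :
    IntegrableOn (fun s => (U t * (1 - P) * V s) (h s)) (Set.Ioi t) ∧
    ‖∫ s in Set.Ioi t, (U t * (1 - P) * V s) (h s)‖ ≤ K * C / α := by
  have hbd : ∀ᵐ s ∂(volume.restrict (Set.Ioi t)),
      ‖(U t * (1 - P) * V s) (h s)‖ ≤ (K * C) * Real.exp (-α * (s - t)) := by
    refine (ae_restrict_iff' measurableSet_Ioi).2 (Eventually.of_forall fun s hs => ?_)
    refine (ContinuousLinearMap.le_opNorm _ _).trans ((mul_le_mul (D.b2 t s hs) (hC s)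
      (norm_nonneg _) (mul_nonneg D.hK (Real.exp_pos _).le)).trans_eq (by ring))
  have hi := (expIoi D.hα t).1.const_mul (K * C)
  have hm : Continuous fun s => (U t * (1 - P) * V s) (h s) :=
    (continuous_const.mul D.contV).clm_apply hc
  refine ⟨Integrable.mono' hi hm.aestronglyMeasurable hbd, ?_⟩
  refine (norm_integral_le_of_norm_le hi hbd).trans_eq ?_
  rw [integral_const_mul, (expIoi D.hα t).2]; ring

theorem Dich.intG (D : Dich A U V P α K) {h : ℝ → E} (hc : Continuous h)
    (hb : ∃ C, ∀ t, ‖h t‖ ≤ C) (t : ℝ) :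
    Integrable (fun s => Gc U V P t s (h s)) ∧
    ∫ s, Gc U V P t s (h s) = (∫ s in Set.Iic t, (U t * P * V s) (h s))
      - ∫ s in Set.Ioi t, (U t * (1 - P) * V s) (h s) := by
  obtain ⟨C, hC⟩ := hb
  have c1 : Set.EqOn (fun s => (U t * P * V s) (h s)) (fun s => Gc U V P t s (h s)) (Set.Iic t) := by
    intro s hs
    have hs : s ≤ t := hs
    simp only [Gc, if_pos hs]
  have c2 : Set.EqOn (fun s => -((U t * (1 - P) * V s) (h s))) (fun s => Gc U V P t s (h s))
      (Set.Ioi t) := by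
    intro s hs
    have hs : ¬ s ≤ t := not_le.2 hs
    simp only [Gc, if_neg hs, neg_apply]
  have i1 := (D.int1 hc hC t).1.congr_fun c1 measurableSet_Iic
  have i2 := (show IntegrableOn (fun s => -((U t * (1 - P) * V s) (h s))) (Set.Ioi t) from
    (D.int2 hc hC t).1.neg).congr_fun c2 measurableSet_Ioi
  have i : Integrable (fun s => Gc U V P t s (h s)) := by
    have := i1.union i2
    rwa [Set.Iic_union_Ioi, integrableOn_univ] at this
  refine ⟨i, ?_⟩
  rw [← intervalIntegral.integral_Iic_add_Ioi i1 i2, ← setIntegral_congr_fun measurableSet_Iic c1,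
    ← setIntegral_congr_fun measurableSet_Ioi c2, integral_neg, ← sub_eq_add_neg]

theorem Dich.normG (D : Dich A U V P α K) {h : ℝ → E} (hc : Continuous h) {C : ℝ}
    (hC : ∀ t, ‖h t‖ ≤ C) (t : ℝ) :
    ‖∫ s, Gc U V P t s (h s)‖ ≤ C / (α / (2 * K)) := by
  rw [(D.intG hc ⟨C, hC⟩ t).2]
  refine (norm_sub_le _ _).trans ((add_le_add (D.int1 hc hC t).2 (D.int2 hc hC t).2).trans_eq ?_)
  rw [div_div_eq_mul_div]; ring

theorem Dich.subG (D : Dich A U V P α K) {h k : ℝ → E} (hc : Continuous h) (kc : Continuous k)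
    (hb : ∃ C, ∀ t, ‖h t‖ ≤ C) (kb : ∃ C, ∀ t, ‖k t‖ ≤ C) {C : ℝ}
    (hC : ∀ t, ‖h t - k t‖ ≤ C) (t : ℝ) :
    ‖(∫ s, Gc U V P t s (h s)) - ∫ s, Gc U V P t s (k s)‖ ≤ C / (α / (2 * K)) := by
  rw [← integral_sub (D.intG hc hb t).1 (D.intG kc kb t).1]
  simp only [← map_sub]
  exact D.normG (hc.sub kc) hC t

theorem Dich.derivG (D : Dich A U V P α K) {h : ℝ → E} (hc : Continuous h)
    (hb : ∃ C, ∀ t, ‖h t‖ ≤ C) (t : ℝ) :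
    HasDerivAt (fun t => ∫ s, Gc U V P t s (h s)) (A t (∫ s, Gc U V P t s (h s)) + h t) t := by
  obtain ⟨C, hC⟩ := hb
  have m1 : Continuous fun s => (P * V s) (h s) := (continuous_const.mul D.contV).clm_apply hc
  have m2 : Continuous fun s => ((1 - P) * V s) (h s) :=
    (continuous_const.mul D.contV).clm_apply hc
  have mV : Continuous fun s => (V s) (h s) := D.contV.clm_apply hc
  have i1 : ∀ t, IntegrableOn (fun s => (P * V s) (h s)) (Set.Iic t) := by
    intro t
    have := (V t).integrable_comp (D.int1 hc hC t).1
    refine this.congr (Eventually.of_forall fun s => ?_)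
    show (V t * (U t * P * V s)) (h s) = _
    rw [← mul_assoc, ← mul_assoc, D.VU, one_mul]
  have i2 : ∀ t, IntegrableOn (fun s => ((1 - P) * V s) (h s)) (Set.Ioi t) := by
    intro t
    have := (V t).integrable_comp (D.int2 hc hC t).1
    refine this.congr (Eventually.of_forall fun s => ?_)
    show (V t * (U t * (1 - P) * V s)) (h s) = _
    rw [← mul_assoc, ← mul_assoc, D.VU, one_mul]
  set c0 := (∫ s in Set.Iic (0:ℝ), (P * V s) (h s)) - ∫ s in Set.Ioi (0:ℝ), ((1 - P) * V s) (h s)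
    with hc0
  have hform : ∀ t, ∫ s, Gc U V P t s (h s) = U t (c0 + ∫ s in (0:ℝ)..t, V s (h s)) := by
    intro t
    rw [(D.intG hc ⟨C, hC⟩ t).2]
    have e1 : ∫ s in Set.Iic t, (U t * P * V s) (h s) = U t (∫ s in Set.Iic t, (P * V s) (h s)) :=
      (U t).integral_comp_comm (i1 t)
    have e2 : ∫ s in Set.Ioi t, (U t * (1 - P) * V s) (h s)
        = U t (∫ s in Set.Ioi t, ((1 - P) * V s) (h s)) :=
      (U t).integral_comp_comm (i2 t)
    rw [e1, e2, ← map_sub]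
    congr 1
    have f1 := intervalIntegral.integral_Iic_sub_Iic (i1 0) (i1 t)
    have f2 := intervalIntegral.integral_Ioi_sub_Ioi' (i2 0) (i2 t)
    have f3 : ∫ s in (0:ℝ)..t, V s (h s) = (∫ s in (0:ℝ)..t, (P * V s) (h s))
        + ∫ s in (0:ℝ)..t, ((1 - P) * V s) (h s) := by
      rw [← intervalIntegral.integral_add (m1.intervalIntegrable _ _) (m2.intervalIntegrable _ _)]
      congr 1
      funext s
      simp
    rw [f3, ← f1, ← f2, hc0]
    abel
  have hd : HasDerivAt (fun t => c0 + ∫ s in (0:ℝ)..t, V s (h s)) (V t (h t)) t :=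
    (intervalIntegral.integral_hasDerivAt_right (mV.intervalIntegrable _ _)
      (mV.stronglyMeasurableAtFilter _ _) mV.continuousAt).const_add c0
  have := (D.dU t).clm_apply hd
  rw [funext hform]
  convert this using 1
  rw [← mul_apply_eq_comp (U t), D.UV, hform]
  rfl

theorem Dich.solG (D : Dich A U V P α K) {h x : ℝ → E} (hc : Continuous h)
    (hb : ∃ C, ∀ t, ‖h t‖ ≤ C) (xb : ∃ C, ∀ t, ‖x t‖ ≤ C)
    (hx : ∀ t, HasDerivAt x (A t (x t) + h t) t) (t : ℝ) : x t = ∫ s, Gc U V P t s (h s) := by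
  have := D.homog (w := fun t => x t - ∫ s, Gc U V P t s (h s)) (fun t => by
    have e : A t (x t - ∫ s, Gc U V P t s (h s))
        = (A t (x t) + h t) - (A t (∫ s, Gc U V P t s (h s)) + h t) := by
      rw [map_sub]; abel
    rw [e]
    exact (hx t).sub (D.derivG hc hb t)) (by
    obtain ⟨C, hC⟩ := hb
    obtain ⟨C', hC'⟩ := xb
    exact ⟨_, fun t => (norm_sub_le _ _).trans (add_le_add (hC' t) (D.normG hc hC t))⟩) t
  exact sub_eq_zero.1 this

end Dichpart

theorem core {E : Type*} [NormedAddCommGroup E] [NormedSpace ℝ E] [CompleteSpace E]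
    {A U V : ℝ → E →L[ℝ] E} {P : E →L[ℝ] E} {α K : ℝ} (D : Dich A U V P α K)
    (hG : ∀ h : ℝ → E, RAP h → RAP (fun t => ∫ s, Gc U V P t s (h s)))
    (F : ℝ → E → E) (ξ h0 : ℝ → E) (R κ m : ℝ) (hκ : 0 ≤ κ) (hq : 0 < α / (2 * K))
    (hκq : κ < α / (2 * K)) (hmq : κ + m ≤ α / (2 * K))
    (hF : ∀ φ : ℝ → E, RAP φ → (∀ t, ‖φ t‖ ≤ R) → RAP (fun t => F t (φ t)))
    (hlip : ∀ t x y, ‖x‖ ≤ R → ‖y‖ ≤ R → ‖F t x - F t y‖ ≤ κ * ‖x - y‖)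
    (hξ : RAP ξ) (hR : ∀ t, ‖ξ t‖ + 1 ≤ R) (hh0 : RAP h0)
    (hξ0 : ∀ t, HasDerivAt ξ (A t (ξ t) + h0 t) t)
    (hm : ∀ t, ‖F t (ξ t) - h0 t‖ ≤ m) :
    ∃! ψ : ℝ → E, RAP ψ ∧ (∀ t, HasDerivAt ψ (A t (ψ t) + F t (ψ t)) t) ∧
      ∀ t, ‖ψ t - ξ t‖ ≤ 1 := by
  have hRb : ∀ φ : ℝ → E, (∀ t, ‖φ t - ξ t‖ ≤ 1) → ∀ t, ‖φ t‖ ≤ R := by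
    intro φ h t
    calc ‖φ t‖ = ‖ξ t + (φ t - ξ t)‖ := by congr 1; abel
      _ ≤ _ := norm_add_le _ _
      _ ≤ ‖ξ t‖ + 1 := by gcongr; exact h t
      _ ≤ R := hR t
  set X : Set (BoundedContinuousFunction ℝ E) := {φ | RAP φ ∧ ∀ t, ‖φ t - ξ t‖ ≤ 1} with hX
  have hXc : IsClosed X := by
    refine isClosed_of_closure_subset fun φ hφ => ?_
    rw [Metric.mem_closure_iff] at hφ
    refine ⟨RAP.of_approx fun ε hε => ?_, fun t => le_of_forall_pos_le_add fun ε hε => ?_⟩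
    · obtain ⟨g, hg, hd⟩ := hφ ε hε
      exact ⟨g, hg.1, fun t => by
        rw [← dist_eq_norm]; exact (BoundedContinuousFunction.dist_coe_le_dist t).trans hd.le⟩
    · obtain ⟨g, hg, hd⟩ := hφ ε hε
      have h1 := (BoundedContinuousFunction.dist_coe_le_dist (f := φ) (g := g) t).trans hd.le
      rw [dist_eq_norm] at h1
      calc _ = ‖(g t - ξ t) + (φ t - g t)‖ := by congr 1; abel
        _ ≤ _ := norm_add_le _ _
        _ ≤ _ := add_le_add (hg.2 t) h1
  have hFX : ∀ φ : ℝ → E, RAP φ → (∀ t, ‖φ t - ξ t‖ ≤ 1) → RAP (fun t => F t (φ t)) :=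
    fun φ h1 h2 => hF φ h1 (hRb φ h2)
  have hξ1 : ∀ t, ‖ξ t - ξ t‖ ≤ 1 := by simp
  -- mapping property
  have hmap : ∀ φ : ℝ → E, RAP φ → (∀ t, ‖φ t - ξ t‖ ≤ 1) →
      ∀ t, ‖(∫ s, Gc U V P t s (F s (φ s))) - ξ t‖ ≤ 1 := by
    intro φ h1 h2 t
    rw [D.solG hh0.2.1.continuous hh0.1 hξ.1 hξ0 t]
    have hr := hFX φ h1 h2
    refine (D.subG hr.2.1.continuous hh0.2.1.continuous hr.1 hh0.1 (C := α / (2 * K))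
      (fun s => ?_) t).trans_eq (div_self hq.ne')
    calc _ = ‖(F s (φ s) - F s (ξ s)) + (F s (ξ s) - h0 s)‖ := by congr 1; abel
      _ ≤ _ := norm_add_le _ _
      _ ≤ κ * ‖φ s - ξ s‖ + m := add_le_add (hlip _ _ _ (hRb φ h2 s) (hRb ξ hξ1 s)) (hm s)
      _ ≤ κ * 1 + m := by gcongr; exact h2 s
      _ ≤ _ := by linarith
  have hcon : ∀ φ ψ : ℝ → E, RAP φ → (∀ t, ‖φ t - ξ t‖ ≤ 1) → RAP ψ → (∀ t, ‖ψ t - ξ t‖ ≤ 1) →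
      ∀ d, (∀ t, ‖φ t - ψ t‖ ≤ d) → ∀ t,
      ‖(∫ s, Gc U V P t s (F s (φ s))) - ∫ s, Gc U V P t s (F s (ψ s))‖
        ≤ κ / (α / (2 * K)) * d := by
    intro φ ψ h1 h2 h3 h4 d hd t
    have hr := hFX φ h1 h2
    have hr' := hFX ψ h3 h4
    refine (D.subG hr.2.1.continuous hr'.2.1.continuous hr.1 hr'.1 (C := κ * d)
      (fun s => ?_) t).trans_eq (by ring)
    exact (hlip _ _ _ (hRb φ h2 s) (hRb ψ h4 s)).trans (by gcongr; exact hd s)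
  -- the BCF version
  have toB : ∀ φ : ℝ → E, RAP φ → ∃ b : BoundedContinuousFunction ℝ E, ∀ t, b t = φ t := by
    intro φ h
    obtain ⟨C, hC⟩ := h.1
    exact ⟨BoundedContinuousFunction.ofNormedAddCommGroup φ h.2.1.continuous C hC, fun t => rfl⟩
  have toX : ∀ φ : ℝ → E, RAP φ → (∀ t, ‖φ t - ξ t‖ ≤ 1) → ∃ b : X, ∀ t, b.1 t = φ t := by
    intro φ h1 h2
    obtain ⟨b, hb⟩ := toB φ h1
    have : (b : ℝ → E) = φ := funext hb
    exact ⟨⟨b, by rw [hX]; exact ⟨by rwa [this], by intro t; rw [hb]; exact h2 t⟩⟩, hb⟩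
  have hT : ∀ φ : X, ∃ b : X, ∀ t, b.1 t = ∫ s, Gc U V P t s (F s (φ.1 s)) := fun φ =>
    toX _ (hG _ (hFX φ.1 φ.2.1 φ.2.2)) (hmap φ.1 φ.2.1 φ.2.2)
  choose T hT using hT
  obtain ⟨xi0, -⟩ := toX ξ hξ hξ1
  have : Nonempty X := ⟨xi0⟩
  have : CompleteSpace X := hXc.completeSpace_coe
  have hk0 : 0 ≤ κ / (α / (2 * K)) := by positivity
  have hTc : ContractingWith (κ / (α / (2 * K))).toNNReal T := by
    refine ⟨?_, LipschitzWith.of_dist_le_mul fun φ ψ => ?_⟩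
    · rw [Real.toNNReal_lt_one]
      exact (div_lt_one hq).2 hκq
    · rw [Real.coe_toNNReal _ hk0]
      show dist (T φ).1 (T ψ).1 ≤ _ * dist φ.1 ψ.1
      rw [BoundedContinuousFunction.dist_le (mul_nonneg hk0 dist_nonneg)]
      intro t
      rw [hT, hT, dist_eq_norm]
      exact hcon φ.1 ψ.1 φ.2.1 φ.2.2 ψ.2.1 ψ.2.2 _ (fun s => by
        rw [← dist_eq_norm]; exact BoundedContinuousFunction.dist_coe_le_dist s) t
  have hfix := hTc.fixedPoint_isFixedPt
  set p : X := ContractingWith.fixedPoint T hTc with hp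
  have hpe : ∀ t, p.1 t = ∫ s, Gc U V P t s (F s (p.1 s)) := by
    intro t
    rw [← hT p, show T p = p from hfix]
  have hpr := hFX p.1 p.2.1 p.2.2
  refine ⟨p.1, ⟨p.2.1, fun t => ?_, p.2.2⟩, ?_⟩
  · have := D.derivG hpr.2.1.continuous hpr.1 t
    rw [← hpe t] at this
    exact this.congr_of_eventuallyEq (Eventually.of_forall hpe)
  · rintro ψ ⟨h1, h2, h3⟩
    obtain ⟨b, hb⟩ := toX ψ h1 h3
    have hr := hFX ψ h1 h3
    have hbf : T b = b := by
      apply Subtype.ext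
      ext1 t
      rw [hT]
      simp only [hb]
      exact (D.solG hr.2.1.continuous hr.1 h1.1 h2 t).symm
    have : b = p := hTc.fixedPoint_unique hbf
    funext t
    rw [← hb, this]

theorem mulVecE_eq {n : ℕ} (A : Matrix (Fin n) (Fin n) ℝ) (v : EuclideanSpace ℝ (Fin n)) :
    mulVecE A v = Matrix.toEuclideanCLM (𝕜 := ℝ) A v := rfl

theorem opNorm_eq {n : ℕ} (A : Matrix (Fin n) (Fin n) ℝ) :
    opNorm A = ‖Matrix.toEuclideanCLM (𝕜 := ℝ) A‖ := rfl

theorem mkDich {n : ℕ} (A Φ : ℝ → Matrix (Fin n) (Fin n) ℝ)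
    (P : Matrix (Fin n) (Fin n) ℝ) (α K : ℝ) (hα : 0 < α) (hK : 1 ≤ K)
    (hΦ : IsFundamentalMatrix A Φ) (hdich : ExpDichotomy Φ α K P) :
    Dich (fun t => Matrix.toEuclideanCLM (𝕜 := ℝ) (A t))
      (fun t => Matrix.toEuclideanCLM (𝕜 := ℝ) (Φ t))
      (fun t => Matrix.toEuclideanCLM (𝕜 := ℝ) (Φ t)⁻¹)
      (Matrix.toEuclideanCLM (𝕜 := ℝ) P) α K where
  hα := hα
  hK := by linarith
  U0 := by rw [hΦ.1, map_one]
  UV := fun t => by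
    rw [← map_mul, Matrix.mul_nonsing_inv _ ((Matrix.isUnit_iff_isUnit_det _).1 (hΦ.2.1 t)), map_one]
  VU := fun t => by
    rw [← map_mul, Matrix.nonsing_inv_mul _ ((Matrix.isUnit_iff_isUnit_det _).1 (hΦ.2.1 t)), map_one]
  dU := fun t => by
    have h1 : HasDerivAt (fun τ => (fun i j => Φ τ i j : Fin n → Fin n → ℝ))
        (fun i j => (A t * Φ t) i j) t :=
      hasDerivAt_pi.2 fun i => hasDerivAt_pi.2 fun j => hΦ.2.2 t i j
    let L : (Fin n → Fin n → ℝ) →ₗ[ℝ] (EuclideanSpace ℝ (Fin n) →L[ℝ] EuclideanSpace ℝ (Fin n)) :=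
      { toFun := fun M => Matrix.toEuclideanCLM (𝕜 := ℝ) (Matrix.of M)
        map_add' := fun a b => map_add (Matrix.toEuclideanCLM (𝕜 := ℝ)) (Matrix.of a) (Matrix.of b)
        map_smul' := fun a b => map_smul (Matrix.toEuclideanCLM (𝕜 := ℝ)) a (Matrix.of b) }
    have h2 := (LinearMap.toContinuousLinearMap L).hasFDerivAt.comp_hasDerivAt t h1
    rw [← map_mul]
    exact h2
  b1 := fun t s h => by
    rw [← map_mul, ← map_mul, ← opNorm_eq]; exact hdich.2.1 t s h
  b2 := fun t s h => by
    rw [← map_one (Matrix.toEuclideanCLM (n := Fin n) (𝕜 := ℝ)), ← map_sub, ← map_mul, ← map_mul,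
      ← opNorm_eq]; exact hdich.2.2 t s h

theorem Green_eq {n : ℕ} (Φ : ℝ → Matrix (Fin n) (Fin n) ℝ)
    (P : Matrix (Fin n) (Fin n) ℝ) (t s : ℝ) (v : EuclideanSpace ℝ (Fin n)) :
    mulVecE (GreenKernel Φ P t s) v = Gc (fun t => Matrix.toEuclideanCLM (𝕜 := ℝ) (Φ t))
      (fun t => Matrix.toEuclideanCLM (𝕜 := ℝ) (Φ t)⁻¹)
      (Matrix.toEuclideanCLM (𝕜 := ℝ) P) t s v := by
  rw [mulVecE_eq, GreenKernel, Gc]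
  split_ifs
  · rw [map_mul, map_mul]
  · rw [map_neg, map_mul, map_mul, map_sub, map_one]

/-- Theorem: existence and uniqueness of a remotely almost periodic
solution of the perturbed system `x' = A(t)x + f(t,x) + g_ν(t,x)` under (H1)-(H4). -/
theorem exists_unique_RAP_solution_perturbed {n : ℕ}
    (A Φ : ℝ → Matrix (Fin n) (Fin n) ℝ)
    (P : Matrix (Fin n) (Fin n) ℝ) (α K : ℝ)
    (f : ℝ → EuclideanSpace ℝ (Fin n) → EuclideanSpace ℝ (Fin n))
    (ξ : ℝ → EuclideanSpace ℝ (Fin n))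
    (g : ℝ → EuclideanSpace ℝ (Fin n) → ℝ → EuclideanSpace ℝ (Fin n))
    (νbar : ℝ) (M : ℝ → ℝ) (M₁ GN : ℝ → ℝ → ℝ)
    (hα : 0 < α) (hK : 1 ≤ K) (hνbar : 0 < νbar)
    -- (H1)
    (hARAP : RAPMatrix A)
    (hΦ : IsFundamentalMatrix A Φ)
    (hdich : ExpDichotomy Φ α K P)
    (hGreen : RAPIntegralProperty (GreenKernel Φ P))
    -- (H2)
    (hfRAP : ∀ S : Set (EuclideanSpace ℝ (Fin n)), IsCompact S → RAPUniform f S)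
    (hM : ∀ r > 0, M r < α / (2 * K))
    (hflip : ∀ r > 0, ∀ t : ℝ, ∀ x y : EuclideanSpace ℝ (Fin n),
      ‖x‖ ≤ r → ‖y‖ ≤ r → ‖f t x - f t y‖ ≤ M r * ‖x - y‖)
    (hξRAP : RAP ξ)
    (hξsol : ∀ t, HasDerivAt ξ (mulVecE (A t) (ξ t) + f t (ξ t)) t)
    (hξuniq : ∀ η : ℝ → EuclideanSpace ℝ (Fin n), RAP η →
      (∀ t, HasDerivAt η (mulVecE (A t) (η t) + f t (η t)) t) → η = ξ)
    -- (H3)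
    (hfC2 : ∀ t, ContDiff ℝ 2 (f t))
    (hf2lip : ∀ r > 0, ∃ L, ∀ t : ℝ, ∀ x y : EuclideanSpace ℝ (Fin n),
      ‖x‖ ≤ r → ‖y‖ ≤ r →
      ‖fderiv ℝ (fderiv ℝ (f t)) x - fderiv ℝ (fderiv ℝ (f t)) y‖ ≤ L * ‖x - y‖)
    (hDfRAP : RAP (fun t => fderiv ℝ (f t) (ξ t)))
    (hDfbdd : BddAbove (Set.range fun t => ‖fderiv ℝ (f t) (ξ t)‖))
    (δ : ℝ) (hδdef : δ = ⨆ t, ‖fderiv ℝ (f t) (ξ t)‖)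
    (hδ : δ < α / (4 * K ^ 2))
    (hvarGreen : ∃ (Ψ : ℝ → Matrix (Fin n) (Fin n) ℝ)
        (Q : Matrix (Fin n) (Fin n) ℝ) (β L : ℝ),
      IsFundamentalMatrix (fun t => A t + clmToMatrix (fderiv ℝ (f t) (ξ t))) Ψ ∧
      ExpDichotomy Ψ β L Q ∧ RAPIntegralProperty (GreenKernel Ψ Q))
    -- (H4)
    (hgRAP : ∀ S : Set (EuclideanSpace ℝ (Fin n) × ℝ), Bornology.IsBounded S →
      RAPUniform (fun t p => g t p.1 p.2) S)
    (hg0 : ∀ t x, g t x 0 = 0)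
    (hgbdd : ∀ ν ∈ Set.Icc (0:ℝ) νbar, ∀ r > 0, ∃ C, ∀ t : ℝ,
      ∀ x : EuclideanSpace ℝ (Fin n), ‖x‖ ≤ r → ‖g t x ν‖ ≤ C)
    (hgGN : ∀ r > 0, ∀ ν ∈ Set.Icc (0:ℝ) νbar, ∀ t : ℝ,
      ∀ x : EuclideanSpace ℝ (Fin n), ‖x‖ ≤ r → ‖g t x ν‖ ≤ GN r ν)
    (hglip : ∀ r > 0, ∀ ν ∈ Set.Icc (0:ℝ) νbar, ∀ t : ℝ,
      ∀ x y : EuclideanSpace ℝ (Fin n), ‖x‖ ≤ r → ‖y‖ ≤ r →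
      ‖g t x ν - g t y ν‖ ≤ M₁ r ν * ‖x - y‖)
    (hGN0 : ∀ r > 0, Filter.Tendsto (GN r) (nhdsWithin 0 (Set.Ioi 0)) (nhds 0))
    (hM₁0 : ∀ r > 0, Filter.Tendsto (M₁ r) (nhdsWithin 0 (Set.Ioi 0)) (nhds 0)) :
    ∃ r > 0, ∃ ν₀ > 0, ν₀ ≤ νbar ∧ ∀ ν ∈ Set.Icc (0:ℝ) ν₀,
      ∃! ψ : ℝ → EuclideanSpace ℝ (Fin n),
        RAP ψ ∧
        (∀ t, HasDerivAt ψ (mulVecE (A t) (ψ t) + f t (ψ t) + g t (ψ t) ν) t) ∧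
        ∀ t, ‖ψ t - ξ t‖ ≤ r := by
  have D := mkDich A Φ P α K hα hK hΦ hdich
  have hG : ∀ h : ℝ → EuclideanSpace ℝ (Fin n), RAP h → RAP (fun t => ∫ s, Gc
      (fun t => Matrix.toEuclideanCLM (𝕜 := ℝ) (Φ t))
      (fun t => Matrix.toEuclideanCLM (𝕜 := ℝ) (Φ t)⁻¹)
      (Matrix.toEuclideanCLM (𝕜 := ℝ) P) t s (h s)) := by
    intro h hh
    have := hGreen h hh
    simpa only [Green_eq] using this
  obtain ⟨C, hC⟩ := hξRAP.1
  have hC0 : 0 ≤ C := (norm_nonneg _).trans (hC 0)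
  have hR : 0 < C + 1 := by linarith
  have hq : 0 < α / (2 * K) := by positivity
  set q := α / (2 * K) with hqdef
  set Mp := max (M (C + 1)) 0 with hMp
  have hMpq : Mp < q := max_lt (hM _ hR) hq
  set m := (q - Mp) / 2 with hm
  have hm0 : 0 < m := by linarith
  have hMp0 : 0 ≤ Mp := le_max_right _ _
  have e1 := (hGN0 (C + 1) hR).eventually (gt_mem_nhds hm0)
  have e2 := (hM₁0 (C + 1) hR).eventually (gt_mem_nhds hm0)
  obtain ⟨u, hu, hsub⟩ := mem_nhdsGT_iff_exists_Ioo_subset.1 (e1.and e2)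
  have hu : 0 < u := hu
  refine ⟨1, one_pos, min (u / 2) νbar, lt_min (by linarith) hνbar, min_le_right _ _, ?_⟩
  intro ν hν
  have hνb : ν ∈ Set.Icc (0:ℝ) νbar := ⟨hν.1, hν.2.trans (min_le_right _ _)⟩
  have hg : (∀ t x, ‖x‖ ≤ C + 1 → ‖g t x ν‖ ≤ m) ∧
      ∀ t x y, ‖x‖ ≤ C + 1 → ‖y‖ ≤ C + 1 → ‖g t x ν - g t y ν‖ ≤ m * ‖x - y‖ := by
    rcases hν.1.eq_or_lt with h | h
    · subst h
      simp only [hg0, norm_zero, sub_zero]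
      exact ⟨fun _ _ _ => hm0.le, fun _ _ _ _ _ => by positivity⟩
    · have hs := hsub ⟨h, (hν.2.trans (min_le_left _ _)).trans_lt (by linarith)⟩
      exact ⟨fun t x hx => (hgGN _ hR ν hνb t x hx).trans hs.1.le, fun t x y hx hy =>
        (hglip _ hR ν hνb t x y hx hy).trans
          (mul_le_mul_of_nonneg_right hs.2.le (norm_nonneg _))⟩
  have hfc : ∀ φ : ℝ → EuclideanSpace ℝ (Fin n), RAP φ → (∀ t, ‖φ t‖ ≤ C + 1) →
      RAP (fun t => f t (φ t)) := fun φ h1 h2 =>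
    RAP.comp (hfRAP (closedBall 0 (C + 1)) (isCompact_closedBall _ _)) h1 (by simpa using h2)
  have hgc : ∀ φ : ℝ → EuclideanSpace ℝ (Fin n), RAP φ → (∀ t, ‖φ t‖ ≤ C + 1) →
      RAP (fun t => g t (φ t) ν) := fun φ h1 h2 =>
    RAP.comp (φ := fun t => (φ t, ν)) (hgRAP (closedBall 0 (C + 1) ×ˢ {ν})
      (isBounded_closedBall.prod Bornology.isBounded_singleton))
      (RAP.of_TSet1 (by
          obtain ⟨c, hc⟩ := h1.1
          exact ⟨max c ‖ν‖, fun t => by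
            rw [Prod.norm_def]; exact max_le_max (hc t) le_rfl⟩)
        (h1.2.1.prodMk uniformContinuous_const)
        (fun ε hε => (h1.dense ε hε).mono fun τ hτ => by
          refine Eventually.mono hτ fun t ht => ?_
          simpa [Prod.norm_def] using ht)) (by simpa using h2)
  have hξR : ∀ t, ‖ξ t‖ ≤ C + 1 := fun t => (hC t).trans (by linarith)
  have := core D hG (fun t x => f t x + g t x ν) ξ (fun t => f t (ξ t)) (C + 1) (Mp + m) m
    (by linarith) hq (by linarith) (by linarith)
    (fun φ h1 h2 => (hfc φ h1 h2).add (hgc φ h1 h2))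
    (fun t x y hx hy => by
      rw [add_sub_add_comm]
      refine (norm_add_le _ _).trans ?_
      rw [add_mul]
      exact add_le_add ((hflip _ hR t x y hx hy).trans
        (mul_le_mul_of_nonneg_right (le_max_left _ _) (norm_nonneg _))) (hg.2 t x y hx hy))
    hξRAP (fun t => by linarith [hC t]) (hfc ξ hξRAP hξR) hξsol
    (fun t => by
      rw [add_sub_cancel_left]; exact hg.1 t _ (hξR t))
  simpa only [← add_assoc, mulVecE_eq] using this
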